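/- Let G, H be closed permutation groups on an infinite set X with H ≤ G, G and H orbit-equivalent, and G primitive but not 2-transitive. Then H = G. -/

import Mathlib

/-- A closed subgroup of Sym(X): contains every permutation that agrees with elements of the
    group on every finite set. -/
def IsClosedGroup {X : Type*} (H : Subgroup (Equiv.Perm X)) : Prop :=
  ∀ g : Equiv.Perm X, (∀ s : Finset X, ∃ h ∈ H, ∀ x ∈ s, h x = g x) → g ∈ H

/-- Ramsey: an infinite set contains a sequence outside `B` which is homogeneous for `c`
and whose members are indistinguishable over `B`. -/
theorem exists_homogeneous_seq {X : Type*} (c : X → X → Prop) {S : Set X} (hS : S.Infinite)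
    (B : Finset X) :
    ∃ u : ℕ → X, Function.Injective u ∧ (∀ i, u i ∈ S ∧ u i ∉ B) ∧
      (∀ b ∈ B, ∀ i j, c b (u i) ↔ c b (u j)) ∧
      ∃ e : Prop, ∀ i j, i < j → (c (u i) (u j) ↔ e) := by
  classical
  have := hS.cofinite_inf_principal_neBot
  let U : Ultrafilter X := Ultrafilter.of (Filter.cofinite ⊓ Filter.principal S)
  have hU : (U : Filter X) ≤ Filter.cofinite ⊓ Filter.principal S := Ultrafilter.of_le _
  have hUcof : ∀ s : Set X, s.Finite → sᶜ ∈ U := fun s hs =>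
    hU (Filter.mem_inf_of_left hs.compl_mem_cofinite)
  have hUS : S ∈ U := hU (Filter.mem_inf_of_right (Filter.mem_principal_self S))
  have key : ∀ p : X → Prop, {v | p v ↔ {v | p v} ∈ U} ∈ U := by
    intro p
    by_cases h : {v | p v} ∈ U
    · simp [h]
    · have h' := Ultrafilter.compl_mem_iff_notMem.2 h
      simp only [h, iff_false]
      exact h'
  let e : X → Prop := fun x => {v | c x v} ∈ U
  let e₀ : Prop := {x | e x} ∈ U
  obtain ⟨u, hu, huu⟩ := exists_seq_of_forall_finset_exists
    (fun y => y ∈ S ∧ y ∉ B ∧ (∀ b ∈ B, c b y ↔ e b) ∧ (e y ↔ e₀))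
    (fun x y => x ≠ y ∧ (c x y ↔ e x)) (by
      intro s _
      have h1 : (⋂ b ∈ B, {v | c b v ↔ e b}) ∈ U :=
        (Filter.biInter_finset_mem B).2 fun b _ => key (c b)
      have h2 : (⋂ x ∈ s, {v | c x v ↔ e x}) ∈ U :=
        (Filter.biInter_finset_mem s).2 fun x _ => key (c x)
      have h3 := hUcof (B ∪ s : Finset X) (Finset.finite_toSet _)
      have h4 := key e
      obtain ⟨y, hy⟩ := U.nonempty_of_mem
        (Filter.inter_mem hUS (Filter.inter_mem h1 (Filter.inter_mem h2 (Filter.inter_mem h3 h4))))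
      simp only [Set.mem_inter_iff, Set.mem_iInter, Set.mem_ofPred_eq, Set.mem_compl_iff,
        Finset.coe_union, Set.mem_union, Finset.mem_coe, not_or] at hy
      obtain ⟨hyS, hyB, hys, ⟨hy1, hy2⟩, hy3⟩ := hy
      exact ⟨y, ⟨hyS, hy1, hyB, hy3⟩, fun x hx => ⟨fun h => hy2 (h ▸ hx), hys x hx⟩⟩)
  refine ⟨u, ?_, fun i => ⟨(hu i).1, (hu i).2.1⟩, ?_, e₀, ?_⟩
  · intro i j hij
    rcases lt_trichotomy i j with h | h | h
    · exact absurd hij (huu i j h).1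
    · exact h
    · exact absurd hij.symm (huu j i h).1
  · intro b hb i j
    rw [(hu i).2.2.1 b hb, (hu j).2.2.1 b hb]
  · intro i j hij
    rw [(huu i j hij).2, (hu i).2.2.2]

/-- Descent: if each displacement of a point of `A` by some `f ∈ S B` can be eliminated by passing
to another `B'` without creating new displacements, then for some `B` no point of `A` is moved. -/
theorem exists_forall_fixes_of_step {X : Type*} (S : Finset X → Set (X → X)) (Q : Finset X → Prop)
    (A : Finset X) (hS : ∀ B, Q B → ∀ f ∈ S B, ∀ a ∈ A, f a ∈ B)
    (step : ∀ B, Q B → ∀ f ∈ S B, ∀ a ∈ A, f a ≠ a → ∃ B', Q B' ∧ ∀ f' ∈ S B', ∀ a' ∈ A,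
      f' a' ≠ a' → (∃ h ∈ S B, h a' = f' a') ∧ ¬ (a' = a ∧ f' a' = f a))
    (B₀ : Finset X) (hB₀ : Q B₀) : ∃ B, Q B ∧ ∀ f ∈ S B, ∀ a ∈ A, f a = a := by
  classical
  let E : Finset X → Set (X × X) :=
    fun B => {p | p.1 ∈ A ∧ p.2 ≠ p.1 ∧ ∃ f ∈ S B, f p.1 = p.2}
  have hfin : ∀ B, Q B → (E B).Finite := by
    intro B hB
    refine (Finset.finite_toSet (A ×ˢ B)).subset ?_
    rintro p ⟨ha, -, f, hf, hp⟩
    exact Finset.mem_coe.2 (Finset.mem_product.2 ⟨ha, hp ▸ hS B hB f hf _ ha⟩)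
  induction hn : (E B₀).ncard using Nat.strong_induction_on generalizing B₀ with
  | _ n ih =>
    by_cases hdone : ∀ f ∈ S B₀, ∀ a ∈ A, f a = a
    · exact ⟨B₀, hB₀, hdone⟩
    push Not at hdone
    obtain ⟨f, hf, a, ha, hne⟩ := hdone
    obtain ⟨B', hB', h⟩ := step B₀ hB₀ f hf a ha hne
    refine ih _ ?_ B' hB' rfl
    rw [← hn]
    refine Set.ncard_lt_ncard ⟨?_, ?_⟩ (hfin B₀ hB₀)
    · rintro p ⟨ha', hz, f', hf', hp⟩
      obtain ⟨h', hh', hp'⟩ := (h f' hf' _ ha' (hp ▸ hz)).1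
      exact ⟨ha', hz, h', hh', hp'.trans hp⟩
    · intro hsub
      obtain ⟨-, -, f', hf', hfa⟩ := hsub (show (a, f a) ∈ E B₀ from ⟨ha, hne, f, hf, rfl⟩)
      exact (h f' hf' a ha (by simpa [hfa] using hne)).2 ⟨rfl, hfa⟩

/-- The injective self-maps of the finite set `B` that preserve the relation `c` on `B`. -/
def autOn {X : Type*} (c : X → X → Prop) (B : Finset X) : Set (X → X) :=
  {f | (∀ x ∈ B, f x ∈ B) ∧ Set.InjOn f B ∧ ∀ x ∈ B, ∀ y ∈ B, (c x y ↔ c (f x) (f y))}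

/-- If `K` is larger than `B`, every injective self-map of `B ∪ K` maps some element of `K`
into `K`. -/
theorem exists_mem_map_mem {X : Type*} [DecidableEq X] {B K : Finset X} (hcard : B.card < K.card)
    {f : X → X} (hf : ∀ x ∈ B ∪ K, f x ∈ B ∪ K) (hinj : Set.InjOn f (B ∪ K : Finset X)) :
    ∃ k ∈ K, f k ∈ K := by
  by_contra! h
  have hsub : K.image f ⊆ B := by
    intro y hy
    obtain ⟨k, hk, rfl⟩ := Finset.mem_image.1 hy
    have := hf k (Finset.mem_union_right _ hk)
    exact (Finset.mem_union.1 this).resolve_right (h k hk)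
  have h1 := Finset.card_le_card hsub
  rw [Finset.card_image_of_injOn (hinj.mono (by simp))] at h1
  omega

/-! ### Graphs -/

/-- Two points are twins over `B` if no third point of `B` separates them. -/
def Twin {X : Type*} (c : X → X → Prop) (B : Finset X) (x y : X) : Prop :=
  ∀ w ∈ B, w ≠ x → w ≠ y → (c x w ↔ c y w)

theorem Twin.symm {X : Type*} {c : X → X → Prop} {B : Finset X} {x y : X} (h : Twin c B x y) :
    Twin c B y x := fun w hw h1 h2 => (h w hw h2 h1).symm

theorem Twin.mono {X : Type*} {c : X → X → Prop} {B B' : Finset X} {x y : X} (h : Twin c B' x y)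
    (hB : B ⊆ B') : Twin c B x y := fun w hw => h w (hB hw)

theorem Twin.trans {X : Type*} {c : X → X → Prop} (hsymm : ∀ x y, c x y ↔ c y x) {B : Finset X}
    {x y z : X} (hx : x ∈ B) (hy : y ∈ B) (hz : z ∈ B) (h : Twin c B x y) (h' : Twin c B y z) :
    Twin c B x z := by
  intro w hw hwx hwz
  by_cases hwy : w = y
  · subst hwy
    by_cases hxz : x = z
    · rw [hxz]
    · have h1 := h z hz (Ne.symm hxz) hwz.symm
      have h2 := h' x hx hwx.symm hxz
      grind
  · exact (h w hw hwx hwy).trans (h' w hw hwy hwz)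

theorem Twin.of_map {X : Type*} {c : X → X → Prop} {B : Finset X} {f : X → X}
    (hf : f ∈ autOn c B) {x y : X} (hx : x ∈ B) (hy : y ∈ B) (h : Twin c B (f x) (f y)) :
    Twin c B x y := by
  intro w hw hwx hwy
  rw [hf.2.2 x hx w hw, hf.2.2 y hy w hw]
  exact h _ (hf.1 w hw) (fun e => hwx (hf.2.1 hw hx e)) (fun e => hwy (hf.2.1 hw hy e))

/-- An automorphism of a finite graph containing a large homogeneous set `K` of twins can be
corrected to fix `K` pointwise, without changing the image of a point having no twins. -/
theorem exists_autOn_fixing {X : Type*} [DecidableEq X] {c : X → X → Prop}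
    (hsymm : ∀ x y, c x y ↔ c y x) {B K : Finset X} (hcard : B.card < K.card)
    (hK : ∀ x ∈ K, ∀ y ∈ K, Twin c (B ∪ K) x y) (hdisj : ∀ x ∈ K, x ∉ B) {f : X → X}
    (hf : f ∈ autOn c (B ∪ K)) {a : X} (ha : a ∈ B)
    (hat : ∀ y ∈ B ∪ K, y ≠ a → ¬ Twin c (B ∪ K) a y) :
    ∃ h ∈ autOn c (B ∪ K), (∀ u ∈ K, h u = u) ∧ (∀ x ∈ B, h x ∈ B) ∧ h a = f a := by
  classical
  obtain ⟨k, hk, hfk⟩ := exists_mem_map_mem hcard hf.1 hf.2.1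
  have hKB : ∀ {x}, x ∈ K → x ∈ B ∪ K := fun hx => Finset.mem_union_right _ hx
  have hout : ∀ y ∈ B ∪ K, ¬ Twin c (B ∪ K) k y → ¬ Twin c (B ∪ K) k (f y) := by
    intro y hy hn ht
    exact hn (Twin.of_map hf (hKB hk) hy
      ((hK _ hfk _ hk).trans hsymm (hKB hfk) (hKB hk) (hf.1 y hy) ht))
  have hKT : ∀ x ∈ K, Twin c (B ∪ K) k x := fun x hx => hK k hk x hx
  have hcross : ∀ x ∈ B ∪ K, ∀ y ∈ B ∪ K, Twin c (B ∪ K) k x → ¬ Twin c (B ∪ K) k y →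
      (c x y ↔ c x (f y)) := by
    intro x hx y hy hxT hyT
    have hyT' := hout y hy hyT
    have h1 : c k y ↔ c x y := hxT y hy (fun e => hyT (e ▸ hKT k hk)) (fun e => hyT (e ▸ hxT))
    have h2 : c (f k) (f y) ↔ c x (f y) :=
      ((hK _ hfk _ hk).trans hsymm (hKB hfk) (hKB hk) hx hxT) (f y) (hf.1 y hy)
        (fun e => hyT' (e ▸ hKT _ hfk)) (fun e => hyT' (e ▸ hxT))
    rw [← h1, ← h2]
    exact hf.2.2 k (hKB hk) y hy
  refine ⟨fun x => if Twin c (B ∪ K) k x then x else f x, ⟨?_, ?_, ?_⟩, ?_, ?_, ?_⟩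
  · intro x hx
    dsimp only
    split_ifs
    exacts [hx, hf.1 x hx]
  · intro x hx y hy hxy
    dsimp only at hxy
    split_ifs at hxy with h1 h2 h2
    · exact hxy
    · exact absurd (hxy ▸ h1) (hout y hy h2)
    · exact absurd (hxy ▸ h2) (hout x hx h1)
    · exact hf.2.1 hx hy hxy
  · intro x hx y hy
    dsimp only
    split_ifs with h1 h2 h2
    · rfl
    · exact hcross x hx y hy h1 h2
    · rw [hsymm x y, hsymm (f x) y]
      exact hcross y hy x hx h2 h1
    · exact hf.2.2 x hx y hy
  · intro u hu
    exact if_pos (hKT u hu)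
  · intro x hx
    dsimp only
    split_ifs with h1
    · exact hx
    · refine (Finset.mem_union.1 (hf.1 x (Finset.mem_union_left _ hx))).resolve_right fun h => ?_
      exact hout x (Finset.mem_union_left _ hx) h1 (hKT _ h)
  · refine if_neg fun h => hat k (hKB hk) (fun e => hdisj k hk (e ▸ ha)) h.symm

/-- The points outside `{x, y}` that separate `x` from `y`. -/
def separators {X : Type*} (c : X → X → Prop) (x y : X) : Set X :=
  {z | z ≠ x ∧ z ≠ y ∧ ¬ (c x z ↔ c y z)}

/-- `a` is a limit point: over each finite set some other point looks like `a`. -/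
def IsLimit {X : Type*} (c : X → X → Prop) (a : X) (e : Prop) : Prop :=
  ∀ F : Finset X, ∃ u, u ∉ F ∧ u ≠ a ∧ (c a u ↔ e) ∧ ∀ x ∈ F, x ≠ a → (c x u ↔ c x a)

theorem IsLimit.map {X : Type*} {c : X → X → Prop} {a : X} {e : Prop} (h : IsLimit c a e)
    {g : Equiv.Perm X} (hg : ∀ x y, c x y ↔ c (g x) (g y)) : IsLimit c (g a) e := by
  classical
  intro F
  obtain ⟨u, hu, hua, hcu, hF⟩ := h (F.image g.symm)
  refine ⟨g u, fun h => hu ?_, fun h => hua (g.injective h), by rwa [← hg], ?_⟩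
  · exact Finset.mem_image.2 ⟨g u, h, by simp⟩
  · intro x hx hxa
    have := hF (g.symm x) (Finset.mem_image_of_mem _ hx) (fun h => hxa (by simp [← h]))
    rw [hg, hg (g.symm x) a] at this
    simpa using this

theorem exists_separating_finset {X : Type*} {c : X → X → Prop}
    (hinf : ∀ x y, x ≠ y → (separators c x y).Infinite) (A : Finset X) :
    ∃ D : Finset X, Disjoint A D ∧
      ∀ x ∈ A, ∀ y ∈ A, x ≠ y → ∃ z ∈ D, ¬ (c x z ↔ c y z) := by
  classical
  have h : ∀ p : X × X, ∃ z, p.1 ≠ p.2 → z ∉ A ∧ ¬ (c p.1 z ↔ c p.2 z) := by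
    intro p
    by_cases hp : p.1 = p.2
    · exact ⟨p.1, fun h => absurd hp h⟩
    obtain ⟨z, hz, hzA⟩ := (hinf _ _ hp).exists_notMem_finset A
    exact ⟨z, fun _ => ⟨hzA, hz.2.2⟩⟩
  choose δ hδ using h
  refine ⟨A.offDiag.image δ, Finset.disjoint_left.2 ?_, ?_⟩
  · intro x hx hx'
    obtain ⟨p, hp, rfl⟩ := Finset.mem_image.1 hx'
    exact (hδ p (Finset.mem_offDiag.1 hp).2.2).1 hx
  · intro x hx y hy hxy
    exact ⟨δ (x, y), Finset.mem_image_of_mem _ (Finset.mem_offDiag.2 ⟨hx, hy, hxy⟩),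
      (hδ (x, y) hxy).2⟩

/-- No point of `A` has a twin in `B`. -/
def TwinFree {X : Type*} (c : X → X → Prop) (A B : Finset X) : Prop :=
  ∀ a ∈ A, ∀ y ∈ B, y ≠ a → ¬ Twin c B a y

open Classical in
/-- The pairs consisting of a point of `A` and one of its twins in `B`. -/
noncomputable def twinPairs {X : Type*} (c : X → X → Prop) (A B : Finset X) : Finset (X × X) :=
  (A ×ˢ B).filter fun p => p.2 ≠ p.1 ∧ Twin c B p.1 p.2

theorem mem_twinPairs {X : Type*} {c : X → X → Prop} {A B : Finset X} {x y : X} :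
    (x, y) ∈ twinPairs c A B ↔ x ∈ A ∧ y ∈ B ∧ y ≠ x ∧ Twin c B x y := by
  simp [twinPairs, and_assoc]

/-- If the number of twin pairs is minimal at `B`, then a new point separating a twin pair
`(a, d)` is itself a twin of `a`, and minimality persists. -/
theorem twin_insert_of_minimal {X : Type*} [DecidableEq X] {c : X → X → Prop}
    (hsymm : ∀ x y, c x y ↔ c y x) {A A₁ B : Finset X} (hAB : A ⊆ B) (hA₁ : A₁ ⊆ B)
    (hA : ∀ x ∈ A, ∀ y ∈ A, x ≠ y → ¬ Twin c B x y)
    (hmin : ∀ B', A₁ ⊆ B' → (twinPairs c A B).card ≤ (twinPairs c A B').card)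
    {a d : X} (ha : a ∈ A) (hd : d ∈ B) (hda : d ≠ a) (ht : Twin c B a d)
    {z : X} (hz : z ∉ B) (hsep : ¬ (c a z ↔ c d z)) :
    Twin c (insert z B) a z ∧ (twinPairs c A (insert z B)).card ≤ (twinPairs c A B).card := by
  have hBz : B ⊆ insert z B := Finset.subset_insert z B
  have hdA : d ∉ A := fun h => hA a ha d h hda.symm ht
  have huniq : ∀ a' ∈ A, Twin c (insert z B) a' z → a' = a := by
    intro a' ha' h
    by_contra hne
    have e1 := h a (hBz (hAB ha)) (Ne.symm hne) (fun e => hz (e ▸ hAB ha))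
    have e2 := ht a' (hAB ha') hne (fun e => hdA (e ▸ ha'))
    have e3 := h d (hBz hd) (fun e => hdA (e ▸ ha')) (fun e => hz (e ▸ hd))
    grind
  have hmem : (a, d) ∈ twinPairs c A B := mem_twinPairs.2 ⟨ha, hd, hda, ht⟩
  have hold : ∀ x y, (x, y) ∈ twinPairs c A (insert z B) → y ≠ z →
      (x, y) ∈ (twinPairs c A B).erase (a, d) := by
    intro x y hxy hyz
    obtain ⟨hx, hy, hne, ht'⟩ := mem_twinPairs.1 hxy
    refine Finset.mem_erase.2 ⟨fun e => ?_, mem_twinPairs.2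
      ⟨hx, Finset.mem_of_mem_insert_of_ne hy hyz, hne, ht'.mono hBz⟩⟩
    obtain ⟨rfl, rfl⟩ := Prod.mk.inj e
    exact hsep (ht' z (Finset.mem_insert_self _ _) (fun e => hz (e ▸ hAB ha))
      (fun e => hz (e ▸ hd)))
  have hsub : twinPairs c A (insert z B) ⊆ insert (a, z) ((twinPairs c A B).erase (a, d)) := by
    rintro ⟨x, y⟩ hxy
    by_cases hyz : y = z
    · subst hyz
      obtain ⟨hx, -, -, ht'⟩ := mem_twinPairs.1 hxy
      rw [huniq x hx ht']
      exact Finset.mem_insert_self _ _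
    · exact Finset.mem_insert_of_mem (hold x y hxy hyz)
  have hpos := Finset.card_pos.2 ⟨_, hmem⟩
  have hcard := Finset.card_erase_of_mem hmem
  constructor
  · by_contra hn
    have hsub' : twinPairs c A (insert z B) ⊆ (twinPairs c A B).erase (a, d) := by
      rintro ⟨x, y⟩ hxy
      refine hold x y hxy fun hyz => hn ?_
      subst hyz
      obtain ⟨hx, -, -, ht'⟩ := mem_twinPairs.1 hxy
      exact huniq x hx ht' ▸ ht'
    have h1 := Finset.card_le_card hsub'
    have h2 := hmin (insert z B) (hA₁.trans hBz)
    omega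
  · have h1 := (Finset.card_le_card hsub).trans (Finset.card_insert_le _ _)
    omega

theorem not_isLimit_of_minimal {X : Type*} {c : X → X → Prop}
    (hsymm : ∀ x y, c x y ↔ c y x) {A A₁ B : Finset X} (hAB : A ⊆ B) (hA₁ : A₁ ⊆ B)
    (hA : ∀ x ∈ A, ∀ y ∈ A, x ≠ y → ¬ Twin c B x y)
    (hmin : ∀ B', A₁ ⊆ B' → (twinPairs c A B).card ≤ (twinPairs c A B').card)
    {a d : X} (ha : a ∈ A) (hd : d ∈ B) (hda : d ≠ a) (ht : Twin c B a d) {e : Prop}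
    (he : ¬ (c a d ↔ e)) : ¬ IsLimit c d e := by
  classical
  intro hlim
  obtain ⟨u, huB, -, hdu, hu⟩ := hlim B
  have h1 := hu a (hAB ha) hda.symm
  have h2 := (twin_insert_of_minimal hsymm hAB hA₁ hA hmin ha hd hda ht huB (by grind)).1 d
    (Finset.mem_insert_of_mem hd) hda (fun e => huB (e ▸ hd))
  have h3 := hsymm u d
  grind

theorem exists_twinFree_of_isLimit {X : Type*} {c : X → X → Prop}
    (hsymm : ∀ x y, c x y ↔ c y x) (hinf : ∀ x y, x ≠ y → (separators c x y).Infinite)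
    {e : Prop} (hlim : ∀ x, IsLimit c x e) (A : Finset X) :
    ∃ B, A ⊆ B ∧ TwinFree c A B := by
  classical
  obtain ⟨D, hAD, hD⟩ := exists_separating_finset hinf A
  obtain ⟨B, hB, hmin⟩ : ∃ B, A ∪ D ⊆ B ∧ ∀ B', A ∪ D ⊆ B' →
      (twinPairs c A B).card ≤ (twinPairs c A B').card := by
    obtain ⟨B, hB, h⟩ := (measure fun B => (twinPairs c A B).card).wf.has_min
      {B | A ∪ D ⊆ B} ⟨A ∪ D, Finset.Subset.refl _⟩
    exact ⟨B, hB, fun B' hB' => not_lt.1 (h B' hB')⟩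
  have hAB := Finset.union_subset_left hB
  have hA : ∀ B', A ∪ D ⊆ B' → ∀ x ∈ A, ∀ y ∈ A, x ≠ y → ¬ Twin c B' x y := by
    intro B' hB' x hx y hy hxy ht
    obtain ⟨z, hz, hs⟩ := hD x hx y hy hxy
    exact hs (ht z (hB' (Finset.mem_union_right _ hz))
      (fun e => Finset.disjoint_left.1 hAD hx (e ▸ hz))
      (fun e => Finset.disjoint_left.1 hAD hy (e ▸ hz)))
  refine ⟨B, hAB, fun a ha d hd hda ht => ?_⟩
  by_cases he : c a d ↔ e
  · obtain ⟨z, ⟨-, -, hz⟩, hzB⟩ := (hinf a d hda.symm).exists_notMem_finset B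
    obtain ⟨ht', hcard⟩ := twin_insert_of_minimal hsymm hAB hB (hA B hB) hmin ha hd hda ht hzB hz
    have hBz := Finset.subset_insert z B
    have hd' := ht' d (hBz hd) hda (fun e => hzB (e ▸ hd))
    have hs := hsymm z d
    exact not_isLimit_of_minimal hsymm (hAB.trans hBz) (hB.trans hBz) (hA _ (hB.trans hBz))
      (fun B' hB' => hcard.trans (hmin B' hB')) ha (Finset.mem_insert_self _ _)
      (fun e => hzB (e ▸ hAB ha)) ht' (by grind) (hlim z)
  · exact not_isLimit_of_minimal hsymm hAB hB (hA B hB) hmin ha hd hda ht he (hlim d)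

/-- A large homogeneous set of twins can be found inside any infinite set. -/
theorem exists_twin_finset {X : Type*} [DecidableEq X] {c : X → X → Prop}
    (hsymm : ∀ x y, c x y ↔ c y x) {S : Set X} (hS : S.Infinite) (B : Finset X) :
    ∃ K : Finset X, B.card < K.card ∧ (∀ x ∈ K, x ∈ S ∧ x ∉ B) ∧
      ∀ x ∈ K, ∀ y ∈ K, Twin c (B ∪ K) x y := by
  obtain ⟨u, hinj, hu, huB, e, he⟩ := exists_homogeneous_seq c hS B
  have he' : ∀ i j, i ≠ j → (c (u i) (u j) ↔ e) := by
    intro i j hij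
    rcases lt_or_gt_of_ne hij with h | h
    · exact he i j h
    · rw [hsymm, he j i h]
  refine ⟨(Finset.range (B.card + 1)).image u, ?_, ?_, ?_⟩
  · rw [Finset.card_image_of_injective _ hinj]
    simp
  · intro x hx
    obtain ⟨i, -, rfl⟩ := Finset.mem_image.1 hx
    exact hu i
  · intro x hx y hy w hw hwx hwy
    obtain ⟨i, -, rfl⟩ := Finset.mem_image.1 hx
    obtain ⟨j, -, rfl⟩ := Finset.mem_image.1 hy
    rcases Finset.mem_union.1 hw with hw | hw
    · rw [hsymm, hsymm (u j)]
      exact huB w hw i j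
    · obtain ⟨l, -, rfl⟩ := Finset.mem_image.1 hw
      rw [he' i l (fun e => hwx (e ▸ rfl)), he' j l (fun e => hwy (e ▸ rfl))]

/-- A point `a` that is not a limit is recognised inside the whole graph by a finite set. -/
theorem exists_recognising_finset {X : Type*} {c : X → X → Prop} (hsymm : ∀ x y, c x y ↔ c y x)
    (hinf : ∀ x y, x ≠ y → (separators c x y).Infinite) {a : X}
    (hlim : ∀ e, ¬ IsLimit c a e) :
    ∃ F : Finset X, ∀ u, u ≠ a → ¬ Twin c F a u := by
  classical
  have hF : ∀ e, ∃ F : Finset X, ∀ u, u ∉ F → u ≠ a → (c a u ↔ e) →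
      ∃ x ∈ F, x ≠ a ∧ ¬ (c x u ↔ c x a) := by
    intro e
    by_contra! h
    exact hlim e fun F => by
      obtain ⟨u, h1, h2, h3, h4⟩ := h F
      exact ⟨u, h1, h2, h3, h4⟩
  obtain ⟨F₁, h₁⟩ := hF True
  obtain ⟨F₂, h₂⟩ := hF False
  have hsep : ∀ u, ∃ z, u ≠ a → z ∈ separators c a u := by
    intro u
    by_cases hu : u = a
    · exact ⟨u, fun h => absurd hu h⟩
    · obtain ⟨z, hz⟩ := (hinf a u (Ne.symm hu)).nonempty
      exact ⟨z, fun _ => hz⟩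
  choose s hs using hsep
  have hout : ∀ u, u ∉ F₁ ∪ F₂ → u ≠ a → ∃ x ∈ F₁ ∪ F₂, x ≠ a ∧ ¬ (c x u ↔ c x a) := by
    intro u hu hua
    rw [Finset.mem_union, not_or] at hu
    by_cases hc : c a u
    · obtain ⟨x, hx, h⟩ := h₁ u hu.1 hua (by simpa using hc)
      exact ⟨x, Finset.mem_union_left _ hx, h⟩
    · obtain ⟨x, hx, h⟩ := h₂ u hu.2 hua (by simpa using hc)
      exact ⟨x, Finset.mem_union_right _ hx, h⟩
  refine ⟨(F₁ ∪ F₂) ∪ (F₁ ∪ F₂).image s, fun u hua ht => ?_⟩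
  by_cases hu : u ∈ F₁ ∪ F₂
  · obtain ⟨h1, h2, h3⟩ := hs u hua
    exact h3 (ht _ (Finset.mem_union_right _ (Finset.mem_image_of_mem _ hu)) h1 h2)
  · obtain ⟨x, hx, hxa, hc⟩ := hout u hu hua
    have := ht x (Finset.mem_union_left _ hx) hxa (fun e => hu (e ▸ hx))
    rw [hsymm a, hsymm u] at this
    exact hc this.symm

/-- A point `d` that is a limit can be replaced by a large set of points looking like `d`. -/
theorem exists_replacement {X : Type*} {c : X → X → Prop} (hsymm : ∀ x y, c x y ↔ c y x)
    {A B : Finset X} (hAB : A ⊆ B) (htf : TwinFree c A B)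
    (hsep : ∀ x ∈ A, ∀ y ∈ A, x ≠ y → ∃ z ∈ B, z ∉ A ∧ ¬ (c x z ↔ c y z))
    {d : X} (hd : d ∈ B) (hdA : d ∉ A) {e : Prop} (hlim : IsLimit c d e) :
    ∃ B' : Finset X, A ⊆ B' ∧ TwinFree c A B' ∧
      (∀ x ∈ A, ∀ y ∈ A, x ≠ y → ∃ z ∈ B', z ∉ A ∧ ¬ (c x z ↔ c y z)) ∧
      ∀ f ∈ autOn c B', ∀ a ∈ A, f a ≠ d ∧ (c a d ↔ c (f a) d) ∧ ∃ h ∈ autOn c B, h a = f a := by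
  classical
  have hS : {u | u ∉ B ∧ ∀ x ∈ B, x ≠ d → (c x u ↔ c x d)}.Infinite := by
    intro hfin
    obtain ⟨u, hu, -, -, h⟩ := hlim (B ∪ hfin.toFinset)
    rw [Finset.mem_union, not_or, Set.Finite.mem_toFinset] at hu
    exact hu.2 ⟨hu.1, fun x hx => h x (Finset.mem_union_left _ hx)⟩
  obtain ⟨K, hcard, hK, hKt⟩ := exists_twin_finset hsymm hS (B.erase d)
  have hKB : ∀ k ∈ K, k ∉ B := fun k hk => (hK k hk).1.1
  have hKd : ∀ k ∈ K, ∀ x ∈ B.erase d, (c x k ↔ c x d) := fun k hk x hx =>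
    (hK k hk).1.2 x (Finset.mem_of_mem_erase hx) (Finset.ne_of_mem_erase hx)
  obtain ⟨k, hk⟩ : K.Nonempty := Finset.card_pos.1 (by omega)
  have hkB := hKB k hk
  have hA' : A ⊆ B.erase d := fun a ha => Finset.mem_erase.2 ⟨fun e => hdA (e ▸ ha), hAB ha⟩
  have hkB' : k ∈ B.erase d ∪ K := Finset.mem_union_right _ hk
  have htf' : TwinFree c A (B.erase d ∪ K) := by
    intro a ha y hy hya ht
    have haB := hAB ha
    rcases Finset.mem_union.1 hy with hy | hy
    · have hyB := Finset.mem_of_mem_erase hy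
      refine htf a ha y hyB hya fun w hw hwa hwy => ?_
      by_cases hwd : w = d
      · subst hwd
        rw [← hKd k hk a (hA' ha), ← hKd k hk y hy]
        exact ht k hkB' (fun e => hkB (e ▸ haB)) (fun e => hkB (e ▸ hyB))
      · exact ht w (Finset.mem_union_left _ (Finset.mem_erase.2 ⟨hwd, hw⟩)) hwa hwy
    · refine htf a ha d hd (fun e => hdA (e ▸ ha)) fun w hw hwa hwd => ?_
      have hw' := Finset.mem_erase.2 ⟨hwd, hw⟩
      rw [hsymm d, ← hKd y hy w hw', hsymm w]
      exact ht w (Finset.mem_union_left _ hw') hwa (fun e => hKB y hy (e ▸ hw))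
  refine ⟨B.erase d ∪ K, hA'.trans Finset.subset_union_left, htf', ?_, ?_⟩
  · intro x hx y hy hxy
    obtain ⟨z, hz, hzA, hs⟩ := hsep x hx y hy hxy
    by_cases hzd : z = d
    · subst hzd
      refine ⟨k, hkB', fun h => hkB (hAB h), ?_⟩
      rwa [hKd k hk x (hA' hx), hKd k hk y (hA' hy)]
    · exact ⟨z, Finset.mem_union_left _ (Finset.mem_erase.2 ⟨hzd, hz⟩), hzA, hs⟩
  · intro f hf a ha
    obtain ⟨h, hh, hhK, hhB, hha⟩ := exists_autOn_fixing hsymm hcard hKt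
      (fun x hx => (hK x hx).2) hf (hA' ha) (htf' a ha)
    have hl : ∀ {x}, x ∈ B.erase d → x ∈ B.erase d ∪ K := fun hx => Finset.mem_union_left _ hx
    have hcd : ∀ x ∈ B.erase d, (c x d ↔ c (h x) d) := by
      intro x hx
      rw [← hKd k hk x hx, ← hKd k hk _ (hhB x hx), hh.2.2 x (hl hx) k hkB', hhK k hk]
    refine ⟨hha ▸ Finset.ne_of_mem_erase (hhB a (hA' ha)), hha ▸ hcd a (hA' ha),
      fun x => if x = d then d else h x, ⟨?_, ?_, ?_⟩, ?_⟩
    · intro x hx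
      dsimp only
      split_ifs with hxd
      · exact hd
      · exact Finset.mem_of_mem_erase (hhB x (Finset.mem_erase.2 ⟨hxd, hx⟩))
    · intro x hx y hy hxy
      dsimp only at hxy
      split_ifs at hxy with h1 h2 h2
      · rw [h1, h2]
      · exact absurd hxy.symm (Finset.ne_of_mem_erase (hhB y (Finset.mem_erase.2 ⟨h2, hy⟩)))
      · exact absurd hxy (Finset.ne_of_mem_erase (hhB x (Finset.mem_erase.2 ⟨h1, hx⟩)))
      · exact hh.2.1 (hl (Finset.mem_erase.2 ⟨h1, hx⟩)) (hl (Finset.mem_erase.2 ⟨h2, hy⟩)) hxy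
    · intro x hx y hy
      dsimp only
      split_ifs with h1 h2 h2
      · rw [h1, h2]
      · rw [h1, hsymm d, hsymm d]
        exact hcd y (Finset.mem_erase.2 ⟨h2, hy⟩)
      · rw [h2]
        exact hcd x (Finset.mem_erase.2 ⟨h1, hx⟩)
      · exact hh.2.2 x (hl (Finset.mem_erase.2 ⟨h1, hx⟩)) y (hl (Finset.mem_erase.2 ⟨h2, hy⟩))
    · dsimp only
      have had : a ≠ d := fun e => hdA (e ▸ ha)
      rw [if_neg had, hha]

/-- A vertex-transitive graph in which any two vertices are separated by infinitely many vertices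
is locally rigid. -/
theorem exists_rigid_of_graph {X : Type*} {c : X → X → Prop} (hsymm : ∀ x y, c x y ↔ c y x)
    (hinf : ∀ x y, x ≠ y → (separators c x y).Infinite)
    (htrans : ∀ x y, ∃ g : Equiv.Perm X, (∀ u v, c u v ↔ c (g u) (g v)) ∧ g x = y)
    (A : Finset X) : ∃ B, A ⊆ B ∧ ∀ f ∈ autOn c B, ∀ a ∈ A, f a = a := by
  classical
  by_cases hlim : ∃ x e, IsLimit c x e
  · obtain ⟨x₀, e, hx₀⟩ := hlim
    have hlim : ∀ x, IsLimit c x e := by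
      intro x
      obtain ⟨g, hg, rfl⟩ := htrans x₀ x
      exact hx₀.map hg
    obtain ⟨D, hAD, hD⟩ := exists_separating_finset hinf A
    obtain ⟨B₀, hB₀, htf⟩ := exists_twinFree_of_isLimit hsymm hinf hlim (A ∪ D)
    obtain ⟨B, hB, h⟩ := exists_forall_fixes_of_step (autOn c) (fun B => A ⊆ B ∧ TwinFree c A B ∧
        ∀ x ∈ A, ∀ y ∈ A, x ≠ y → ∃ z ∈ B, z ∉ A ∧ ¬ (c x z ↔ c y z)) A
      (fun B hB f hf a ha => hf.1 a (hB.1 ha)) (by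
        rintro B ⟨hAB, htfB, hsep⟩ f hf a ha hne
        obtain ⟨d, hd, hdA, had⟩ : ∃ d ∈ B, d ∉ A ∧ (f a = d ∨ ¬ (c a d ↔ c (f a) d)) := by
          by_cases hfa : f a ∈ A
          · obtain ⟨d, hd, hdA, hs⟩ := hsep a ha (f a) hfa hne.symm
            exact ⟨d, hd, hdA, Or.inr hs⟩
          · exact ⟨f a, hf.1 a (hAB ha), hfa, Or.inl rfl⟩
        obtain ⟨B', h1, h2, h3, h4⟩ := exists_replacement hsymm hAB htfB hsep hd hdA (hlim d)
        refine ⟨B', ⟨h1, h2, h3⟩, fun f' hf' a' ha' _ => ?_⟩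
        obtain ⟨h5, h6, h7⟩ := h4 f' hf' a' ha'
        refine ⟨h7, ?_⟩
        rintro ⟨rfl, he⟩
        rw [he] at h5 h6
        exact had.elim h5 fun h => h h6)
      B₀ ⟨Finset.union_subset_left hB₀, fun a ha => htf a (Finset.mem_union_left _ ha), by
        intro x hx y hy hxy
        obtain ⟨z, hz, hs⟩ := hD x hx y hy hxy
        exact ⟨z, hB₀ (Finset.mem_union_right _ hz),
          fun h => Finset.disjoint_left.1 hAD h hz, hs⟩⟩
    exact ⟨B, hB.1, h⟩
  · push Not at hlim
    choose F hF using fun a => exists_recognising_finset hsymm hinf (hlim a)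
    obtain ⟨B, hB, h⟩ := exists_forall_fixes_of_step (autOn c)
      (fun B => A ⊆ B ∧ ∀ a ∈ A, ∀ u, u ≠ a → ¬ Twin c B a u) A
      (fun B hB f hf a ha => hf.1 a (hB.1 ha)) (by
        rintro B ⟨hAB, htf⟩ f hf a ha hne
        obtain ⟨K, hcard, hK, hKt⟩ := exists_twin_finset hsymm (hinf a (f a) hne.symm) B
        have htf' : ∀ a ∈ A, ∀ u, u ≠ a → ¬ Twin c (B ∪ K) a u := fun a ha u hu ht =>
          htf a ha u hu (ht.mono Finset.subset_union_left)
        refine ⟨B ∪ K, ⟨hAB.trans Finset.subset_union_left, htf'⟩, fun f' hf' a' ha' _ => ?_⟩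
        obtain ⟨h, hh, hhK, hhB, hha⟩ := exists_autOn_fixing hsymm hcard hKt
          (fun x hx => (hK x hx).2) hf' (hAB ha') (fun y _ => htf' a' ha' y)
        have hl : ∀ {x}, x ∈ B → x ∈ B ∪ K := fun hx => Finset.mem_union_left _ hx
        refine ⟨⟨h, ⟨hhB, hh.2.1.mono fun x hx => hl hx,
          fun x hx y hy => hh.2.2 x (hl hx) y (hl hy)⟩, hha⟩, ?_⟩
        rintro ⟨rfl, he⟩
        obtain ⟨k, hk⟩ : K.Nonempty := Finset.card_pos.1 (by omega)
        refine (hK k hk).1.2.2 ?_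
        have := hh.2.2 a' (hl (hAB ha')) k (Finset.mem_union_right _ hk)
        rwa [hhK k hk, hha, he] at this)
      (A ∪ A.biUnion F) ⟨Finset.subset_union_left, fun a ha u hu ht => hF a u hu (ht.mono
        ((Finset.subset_biUnion_of_mem F ha).trans Finset.subset_union_right))⟩
    exact ⟨B, hB.1, h⟩

/-! ### Tournaments -/

theorem exists_mem_map_eq {X : Type*} {B : Finset X} {f : X → X} (hf : ∀ x ∈ B, f x ∈ B)
    (hinj : Set.InjOn f B) {y : X} (hy : y ∈ B) : ∃ w ∈ B, f w = y := by
  obtain ⟨w, hw, h⟩ := Finset.surjOn_of_injOn_of_card_le f hf hinj le_rfl hy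
  exact ⟨w, hw, h⟩

/-- In a finite tournament, a twin of a fixed point is fixed. -/
theorem map_eq_self_of_twin {X : Type*} {c : X → X → Prop} (hc : ∀ x y, x ≠ y → (c x y ↔ ¬ c y x))
    {B : Finset X} {f : X → X} (hf : f ∈ autOn c B) {x y : X} (hx : x ∈ B) (hy : y ∈ B)
    (hxy : x ≠ y) (hfx : f x = x) (ht : Twin c B x y) : f y = y := by
  by_contra hne
  obtain ⟨w, hw, hwy⟩ := exists_mem_map_eq hf.1 hf.2.1 hy
  have hwx : w ≠ x := fun e => hxy (by rw [← hfx, ← e, hwy])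
  have hwy' : w ≠ y := fun e => hne (by rw [← e, hwy, e])
  have hfyx : f y ≠ x := fun e => hxy (hf.2.1 hx hy (hfx.trans e.symm))
  have h1 := hf.2.2 x hx y hy
  have h2 := hf.2.2 x hx w hw
  have h3 := hf.2.2 y hy w hw
  have h4 := ht w hw hwx hwy'
  have h5 := ht (f y) (hf.1 y hy) hfyx hne
  have h6 := hc y (f y) (Ne.symm hne)
  rw [hfx] at h1 h2
  rw [hwy] at h2 h3
  grind

/-- A long transitive chain, homogeneous over `B`, is fixed pointwise by every automorphism of the
tournament induced on its union with `B`. -/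
theorem map_eq_self_of_chain {X : Type*} [DecidableEq X] {c : X → X → Prop} (hirr : ∀ x, ¬ c x x)
    (hc : ∀ x y, x ≠ y → (c x y ↔ ¬ c y x)) {B : Finset X} {u : ℕ → X}
    (hinj : Function.Injective u) (huB : ∀ i, u i ∉ B)
    (hB : ∀ b ∈ B, ∀ i j, c b (u i) ↔ c b (u j)) {e : Prop}
    (he : ∀ i j, i < j → (c (u i) (u j) ↔ e)) {f : X → X}
    (hf : f ∈ autOn c (B ∪ (Finset.range (B.card + 1)).image u)) {x : X}
    (hx : x ∈ (Finset.range (B.card + 1)).image u) : f x = x := by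
  set K := (Finset.range (B.card + 1)).image u with hK
  have hmem : ∀ i, i ≤ B.card → u i ∈ K := fun i hi =>
    Finset.mem_image_of_mem _ (Finset.mem_range.2 (by omega))
  have hmem' : ∀ i, i ≤ B.card → u i ∈ B ∪ K := fun i hi => Finset.mem_union_right _ (hmem i hi)
  have hK' : ∀ {w}, w ∈ B ∪ K → w ∈ B ∨ ∃ l, u l = w := by
    intro w hw
    rcases Finset.mem_union.1 hw with hw | hw
    · exact Or.inl hw
    · obtain ⟨l, -, h⟩ := Finset.mem_image.1 hw
      exact Or.inr ⟨l, h⟩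
  have hBu : ∀ b ∈ B, ∀ i j, c (u i) b ↔ c (u j) b := by
    intro b hb i j
    rw [hc (u i) b (fun e => huB i (e ▸ hb)), hc (u j) b (fun e => huB j (e ▸ hb)), hB b hb i j]
  have hrev : ∀ i j, j < i → (c (u i) (u j) ↔ ¬ e) := by
    intro i j hij
    rw [hc _ _ (fun h => hij.ne (hinj h).symm), he j i hij]
  have htr : ∀ i j l, c (u i) (u j) → c (u j) (u l) → c (u i) (u l) := by
    intro i j l h1 h2
    have h3 := he i j
    have h4 := he j l
    have h5 := he i l
    have h6 := hrev i j
    have h7 := hrev j l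
    have h8 := hrev i l
    have h9 := hirr (u i)
    have h10 := hirr (u j)
    rcases lt_trichotomy i j with h | h | h <;> rcases lt_trichotomy j l with h' | h' | h' <;>
      grind
  have hcard : ∀ {d : X → X → Prop} {y z : X}, (∀ x ∈ B ∪ K, ∀ y ∈ B ∪ K, d x y → d (f x) (f y)) →
      y ∈ B ∪ K → z ∈ B ∪ K → f y = z → d y z → ¬ d z z →
      (∀ w ∈ B ∪ K, d z w → d y w) → False := by
    classical
    intro d y z hd hy hz hyz h1 h2 h3
    have hle : ((B ∪ K).filter (d y)).card ≤ ((B ∪ K).filter (d z)).card := by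
      refine Finset.card_le_card_of_injOn f ?_ (hf.2.1.mono (Finset.coe_subset.2 (Finset.filter_subset _ _)))
      intro w hw
      obtain ⟨hw, hyw⟩ := Finset.mem_filter.1 hw
      exact Finset.mem_coe.2 (Finset.mem_filter.2 ⟨hf.1 w hw, hyz ▸ hd y hy w hw hyw⟩)
    refine absurd hle (not_le.2 (Finset.card_lt_card ⟨?_, fun h => ?_⟩))
    · intro w hw
      obtain ⟨hw, hzw⟩ := Finset.mem_filter.1 hw
      exact Finset.mem_filter.2 ⟨hw, h3 w hw hzw⟩
    · exact h2 (Finset.mem_filter.1 (h (Finset.mem_filter.2 ⟨hz, h1⟩))).2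
  obtain ⟨k, hk, hfk⟩ := exists_mem_map_mem (B := B) (K := K)
    (by rw [hK, Finset.card_image_of_injective _ hinj]; simp) hf.1 hf.2.1
  obtain ⟨i, hi, rfl⟩ := Finset.mem_image.1 hk
  obtain ⟨j, hj, hij⟩ := Finset.mem_image.1 hfk
  have hi : i ≤ B.card := by simpa [Nat.lt_succ_iff] using hi
  have hj : j ≤ B.card := by simpa [Nat.lt_succ_iff] using hj
  have hfix : f (u i) = u i := by
    by_contra hne
    rw [← hij] at hne
    by_cases h : c (u i) (u j)
    · refine hcard (d := c) (fun x hx y hy => (hf.2.2 x hx y hy).1) (hmem' i hi) (hmem' j hj)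
        hij.symm h (hirr _) fun w hw hjw => ?_
      rcases hK' hw with hw | ⟨l, rfl⟩
      exacts [(hBu w hw i j).2 hjw, htr i j l h hjw]
    · refine hcard (d := fun x y => c y x) (fun x hx y hy => (hf.2.2 y hy x hx).1) (hmem' i hi)
        (hmem' j hj) hij.symm ((hc _ _ hne).2 h) (hirr _) fun w hw hjw => ?_
      rcases hK' hw with hw | ⟨l, rfl⟩
      exacts [(hB w hw i j).2 hjw, htr l j i hjw ((hc _ _ hne).2 h)]
  have htwin : ∀ l, Twin c (B ∪ K) (u l) (u (l + 1)) := by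
    intro l w hw h1 h2
    rcases hK' hw with hw | ⟨m, rfl⟩
    · exact hBu w hw _ _
    · have hm : m ≠ l := fun h => h1 (h ▸ rfl)
      have hm' : m ≠ l + 1 := fun h => h2 (h ▸ rfl)
      rcases lt_or_gt_of_ne hm with h | h
      · rw [hrev _ _ h, hrev _ _ (by omega)]
      · rw [he _ _ h, he _ _ (by omega)]
  have hstep : ∀ l, l + 1 ≤ B.card → (f (u l) = u l ↔ f (u (l + 1)) = u (l + 1)) := by
    intro l hl
    have hne : u l ≠ u (l + 1) := fun h => absurd (hinj h) (by omega)
    exact ⟨fun h => map_eq_self_of_twin hc hf (hmem' l (by omega)) (hmem' _ hl) hne h (htwin l),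
      fun h => map_eq_self_of_twin hc hf (hmem' _ hl) (hmem' l (by omega)) hne.symm h
        (htwin l).symm⟩
  have hall : ∀ l, l ≤ B.card → (f (u l) = u l ↔ f (u 0) = u 0) := by
    intro l
    induction l with
    | zero => intro _; rfl
    | succ l ih => intro hl; rw [← hstep l hl, ih (by omega)]
  obtain ⟨l, hl, rfl⟩ := Finset.mem_image.1 hx
  exact (hall l (by simpa [Nat.lt_succ_iff] using hl)).2 ((hall i hi).1 hfix)

/-- A tournament in which any two vertices are separated by infinitely many vertices is locally
rigid. -/
theorem exists_rigid_of_tournament {X : Type*} {c : X → X → Prop} (hirr : ∀ x, ¬ c x x)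
    (hc : ∀ x y, x ≠ y → (c x y ↔ ¬ c y x))
    (hinf : ∀ x y, x ≠ y → (separators c x y).Infinite) (A : Finset X) :
    ∃ B, A ⊆ B ∧ ∀ f ∈ autOn c B, ∀ a ∈ A, f a = a := by
  classical
  refine exists_forall_fixes_of_step (autOn c) (fun B => A ⊆ B) A
    (fun B hB f hf a ha => hf.1 a (hB ha)) ?_ A (Finset.Subset.refl A)
  intro B hAB f hf a ha hne
  obtain ⟨u, hinj, hu, hB, e, he⟩ := exists_homogeneous_seq c (hinf a (f a) hne.symm) B
  refine ⟨B ∪ (Finset.range (B.card + 1)).image u, hAB.trans Finset.subset_union_left, ?_⟩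
  intro f' hf' a' ha' _
  have hfix := fun x => map_eq_self_of_chain hirr hc hinj (fun i => (hu i).2) hB he hf' (x := x)
  have hl : ∀ {x}, x ∈ B → x ∈ B ∪ (Finset.range (B.card + 1)).image u :=
    fun hx => Finset.mem_union_left _ hx
  refine ⟨⟨f', ⟨fun x hx => ?_, hf'.2.1.mono fun x hx => hl hx,
    fun x hx y hy => hf'.2.2 x (hl hx) y (hl hy)⟩, rfl⟩, ?_⟩
  · refine (Finset.mem_union.1 (hf'.1 x (hl hx))).resolve_right fun h => ?_
    obtain ⟨i, -, hi⟩ := Finset.mem_image.1 h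
    have hxu := hf'.2.1 (Finset.mem_union_right _ h) (hl hx) (hfix _ h)
    rw [← hxu, ← hi] at hx
    exact (hu i).2 hx
  · rintro ⟨rfl, heq⟩
    have h0 : u 0 ∈ (Finset.range (B.card + 1)).image u :=
      Finset.mem_image_of_mem _ (Finset.mem_range.2 (by omega))
    have h1 := hf'.2.2 a' (hl (hAB ha')) (u 0) (Finset.mem_union_right _ h0)
    rw [hfix _ h0, heq] at h1
    exact (hu 0).1.2.2 h1

/-! ### Permutation groups -/

/-- `G` preserves no equivalence relation other than equality and the universal relation. -/
def PreservesOnlyTrivialSetoids {X : Type*} (G : Subgroup (Equiv.Perm X)) : Prop :=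
  ∀ r : Setoid X, (∀ g ∈ G, ∀ x y : X, r.r x y → r.r (g x) (g y)) →
    (∀ x y : X, r.r x y → x = y) ∨ (∀ x y : X, r.r x y)

/-- Every finite set `A` is contained in a finite set whose setwise stabiliser in `G` fixes `A`
pointwise. -/
def LocallyRigid {X : Type*} (G : Subgroup (Equiv.Perm X)) : Prop :=
  ∀ A : Finset X, ∃ B : Finset X, A ⊆ B ∧
    ∀ g ∈ G, (∀ x ∈ B, g x ∈ B) → ∀ a ∈ A, g a = a

/-! ### Locally finite graphs -/

theorem exists_adj_dist_lt {X : Type*} {Γ : SimpleGraph X} (hconn : Γ.Connected) {x z : X}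
    (h : x ≠ z) : ∃ y, Γ.Adj x y ∧ Γ.dist y z < Γ.dist x z := by
  obtain ⟨p, hp⟩ := (hconn x z).exists_walk_length_eq_dist
  cases p with
  | nil => exact absurd rfl h
  | cons hadj q =>
    refine ⟨_, hadj, ?_⟩
    have := SimpleGraph.dist_le q
    rw [SimpleGraph.Walk.length_cons] at hp
    omega

theorem finite_ball {X : Type*} {Γ : SimpleGraph X} (hconn : Γ.Connected)
    (hfin : ∀ x, (Γ.neighborSet x).Finite) (x : X) (n : ℕ) : {y | Γ.dist y x ≤ n}.Finite := by
  induction n with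
  | zero =>
    refine (Set.finite_singleton x).subset fun y hy => ?_
    exact hconn.dist_eq_zero_iff.1 (Nat.le_zero.1 hy)
  | succ n ih =>
    refine (ih.union (ih.biUnion fun z _ => hfin z)).subset fun y hy => ?_
    by_cases hyx : y = x
    · exact Or.inl (by simp [hyx])
    · obtain ⟨z, hz, hlt⟩ := exists_adj_dist_lt hconn hyx
      have hy : Γ.dist y x ≤ n + 1 := hy
      exact Or.inr (Set.mem_biUnion (show Γ.dist z x ≤ n by omega) hz.symm)

theorem dist_map_eq {X : Type*} {G : Subgroup (Equiv.Perm X)} {Γ : SimpleGraph X}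
    (hconn : Γ.Connected) (hΓ : ∀ g ∈ G, ∀ x y, Γ.Adj x y → Γ.Adj (g x) (g y))
    {g : Equiv.Perm X} (hg : g ∈ G) (x y : X) : Γ.dist (g x) (g y) = Γ.dist x y := by
  have key : ∀ g ∈ G, ∀ x y, Γ.dist (g x) (g y) ≤ Γ.dist x y := by
    intro g hg x y
    obtain ⟨p, hp⟩ := (hconn x y).exists_walk_length_eq_dist
    let φ : Γ →g Γ := ⟨g, fun h => hΓ g hg _ _ h⟩
    rw [← hp, ← SimpleGraph.Walk.length_map φ p]
    exact SimpleGraph.dist_le _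
  refine le_antisymm (key g hg x y) ?_
  simpa using key g⁻¹ (G.inv_mem hg) (g x) (g y)

/-- A primitive group preserving a nonempty locally finite graph is locally rigid. -/
theorem locallyRigid_of_locallyFinite {X : Type*} [Infinite X] {G : Subgroup (Equiv.Perm X)}
    (hprim : PreservesOnlyTrivialSetoids G) {Γ : SimpleGraph X}
    (hΓ : ∀ g ∈ G, ∀ x y, Γ.Adj x y → Γ.Adj (g x) (g y))
    (hfin : ∀ x, (Γ.neighborSet x).Finite) {x₀ y₀ : X} (h₀ : Γ.Adj x₀ y₀) : LocallyRigid G := by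
  classical
  have hconn : Γ.Connected := by
    refine (SimpleGraph.connected_iff _).2 ⟨?_, ⟨x₀⟩⟩
    refine (hprim Γ.reachableSetoid ?_).resolve_left fun h => h₀.ne (h _ _ h₀.reachable)
    intro g hg x y hxy
    exact SimpleGraph.Reachable.map ⟨g, fun h => hΓ g hg _ _ h⟩ hxy
  have hinf : ∀ x y, x ≠ y → {z | Γ.dist z x ≠ Γ.dist z y}.Infinite := by
    let r : Setoid X :=
      { r := fun x y => {z | Γ.dist z x ≠ Γ.dist z y}.Finite
        iseqv := by
          refine ⟨fun x => by simp, fun {x y} h => ?_, fun {x y z} h h' => ?_⟩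
          · simpa only [ne_comm] using h
          · refine (h.union h').subset fun w hw => ?_
            by_contra hn
            simp only [Set.mem_union, Set.mem_ofPred_eq, not_or, not_not] at hn
            exact hw (hn.1.trans hn.2) }
    have hr : ∀ x y, r x y → x = y := by
      refine (hprim r ?_).resolve_right fun h => ?_
      · intro g hg x y hxy
        refine (Set.Finite.image g hxy).subset fun z hz => ⟨g⁻¹ z, ?_, by simp⟩
        have hd := dist_map_eq hconn hΓ hg (g⁻¹ z)
        have hgz : g (g⁻¹ z) = z := by simp
        simp only [hgz] at hd
        rw [Set.mem_ofPred_eq, ← hd, ← hd]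
        exact hz
      · have hF := ((hfin x₀).biUnion fun y _ => h x₀ y).union (Set.finite_singleton x₀)
        obtain ⟨z, hz⟩ := hF.exists_notMem
        simp only [Set.mem_union, Set.mem_iUnion, Set.mem_singleton_iff, not_or,
          not_exists] at hz
        obtain ⟨y, hy, hlt⟩ := exists_adj_dist_lt hconn (Ne.symm hz.2)
        refine hz.1 y hy (show Γ.dist z x₀ ≠ Γ.dist z y from ?_)
        rw [SimpleGraph.dist_comm, Γ.dist_comm (u := z)]
        exact hlt.ne'
    exact fun x y hxy h => hxy (hr x y h)
  intro A
  obtain ⟨B, hB, h⟩ := exists_forall_fixes_of_step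
    (fun B => {f | ∃ g ∈ G, ⇑g = f ∧ ∀ x ∈ B, f x ∈ B}) (fun B => A ⊆ B) A
    (by rintro B hB f ⟨g, -, -, hf⟩ a ha; exact hf a (hB ha)) (by
      rintro B hAB - ⟨g, -, rfl, hgB⟩ a ha hne
      have haB := hAB ha
      let M := (B ×ˢ B).sup fun p => Γ.dist p.1 p.2
      have hM : ∀ x ∈ B, ∀ y ∈ B, Γ.dist x y ≤ M := fun x hx y hy =>
        Finset.le_sup (f := fun p : X × X => Γ.dist p.1 p.2) (Finset.mk_mem_product hx hy)
      have hnear : (⋃ b ∈ B, {w | Γ.dist w b ≤ M}).Finite :=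
        B.finite_toSet.biUnion fun b _ => finite_ball hconn hfin b M
      obtain ⟨w, hw, hwM⟩ := (hinf a (g a) hne.symm).exists_notMem_finset hnear.toFinset
      simp only [Set.Finite.mem_toFinset, Set.mem_iUnion, Set.mem_ofPred_eq, not_exists,
        not_le] at hwM
      have hwB : w ∉ B := fun h => by simpa using hwM w h
      refine ⟨insert w B, hAB.trans (Finset.subset_insert _ _), ?_⟩
      rintro - ⟨g', hg', rfl, hB'⟩ a' ha' -
      have hw' : g' w = w := by
        by_contra hne'
        have hb := (Finset.mem_insert.1 (hB' w (Finset.mem_insert_self _ _))).resolve_left hne'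
        obtain ⟨b, hbB, hbw⟩ : ∃ b ∈ B, b ≠ g' w := by
          by_cases e : a = g' w
          · exact ⟨g a, hgB a haB, fun e' => hne (e'.trans e.symm)⟩
          · exact ⟨a, haB, e⟩
        obtain ⟨y, hy, rfl⟩ := exists_mem_map_eq hB' g'.injective.injOn
          (Finset.mem_insert_of_mem hbB)
        have hyB := Finset.mem_of_mem_insert_of_ne hy (fun e => hbw (e ▸ rfl))
        have := hwM y hyB
        rw [← dist_map_eq hconn hΓ hg'] at this
        exact absurd this (not_lt.2 (hM _ hb _ hbB))
      refine ⟨⟨g', ⟨g', hg', rfl, fun x hx => ?_⟩, rfl⟩, ?_⟩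
      · refine Finset.mem_of_mem_insert_of_ne (hB' x (Finset.mem_insert_of_mem hx)) fun e => ?_
        exact hwB (g'.injective (e.trans hw'.symm) ▸ hx)
      · rintro ⟨rfl, he⟩
        apply hw
        rw [← dist_map_eq hconn hΓ hg' w a', hw', he])
    A (Finset.Subset.refl A)
  exact ⟨B, hB, fun g hg hgB a ha => h g ⟨g, hg, rfl, hgB⟩ a ha⟩

/-! ### Invariant relations -/

/-- The points related in a different way to `x` and to `y`. -/
def differences {X : Type*} (c : X → X → Prop) (x y : X) : Set X :=
  {z | ¬ (c x z ↔ c y z)}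

theorem differences_comm {X : Type*} (c : X → X → Prop) (x y : X) :
    differences c x y = differences c y x := by
  ext z
  simp only [differences, Set.mem_ofPred_eq, iff_comm]

theorem differences_map {X : Type*} {G : Subgroup (Equiv.Perm X)} {c : X → X → Prop}
    (hc : ∀ g ∈ G, ∀ x y, c x y → c (g x) (g y)) {g : Equiv.Perm X} (hg : g ∈ G) (x y : X) :
    differences c (g x) (g y) = g '' differences c x y := by
  have hc' : ∀ u v, c (g u) (g v) ↔ c u v := fun u v =>
    ⟨fun h => by simpa using hc g⁻¹ (G.inv_mem hg) _ _ h, hc g hg u v⟩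
  ext z
  constructor
  · intro hz
    obtain ⟨w, rfl⟩ := g.surjective z
    exact ⟨w, by simpa [differences, hc'] using hz, rfl⟩
  · rintro ⟨w, hw, rfl⟩
    simpa [differences, hc'] using hw

theorem separators_infinite_or_differences_finite {X : Type*} {G : Subgroup (Equiv.Perm X)}
    (hprim : PreservesOnlyTrivialSetoids G) {c : X → X → Prop}
    (hc : ∀ g ∈ G, ∀ x y, c x y → c (g x) (g y)) :
    (∀ x y, x ≠ y → (separators c x y).Infinite) ∨ ∀ x y, (differences c x y).Finite := by
  let r : Setoid X :=
    { r := fun x y => (differences c x y).Finite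
      iseqv := by
        refine ⟨fun x => by simp [differences], fun {x y} h => ?_, fun {x y z} h h' => ?_⟩
        · rwa [differences_comm]
        · refine (h.union h').subset fun w hw => ?_
          simp only [differences, Set.mem_union, Set.mem_ofPred_eq] at hw ⊢
          grind }
  refine (hprim r ?_).imp (fun h x y hxy hfin => hxy (h x y ?_)) id
  · intro g hg x y hxy
    change (differences c (g x) (g y)).Finite
    rw [differences_map hc hg]
    exact hxy.image g
  · refine (hfin.union (Set.toFinite {x, y})).subset fun z hz => ?_
    simp only [differences, separators, Set.mem_union, Set.mem_ofPred_eq, Set.mem_insert_iff,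
      Set.mem_singleton_iff] at hz ⊢
    grind

theorem locallyRigid_of_autOn {X : Type*} {G : Subgroup (Equiv.Perm X)} {c : X → X → Prop}
    (hc : ∀ g ∈ G, ∀ x y, c x y → c (g x) (g y))
    (h : ∀ A : Finset X, ∃ B, A ⊆ B ∧ ∀ f ∈ autOn c B, ∀ a ∈ A, f a = a) : LocallyRigid G := by
  intro A
  obtain ⟨B, hAB, hB⟩ := h A
  refine ⟨B, hAB, fun g hg hgB => hB g ⟨hgB, g.injective.injOn, fun x _ y _ =>
    ⟨hc g hg x y, fun hxy => by simpa using hc g⁻¹ (G.inv_mem hg) _ _ hxy⟩⟩⟩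

theorem finite_of_differences_ncard_le {X : Type*} {c : X → X → Prop}
    (hfin : ∀ x y, (differences c x y).Finite) {x : X} {e : Prop} {T : Set X} (hT : T.Infinite)
    (h : ∀ y ∈ T, ∀ z, z ≠ y → (c y z ↔ e) → ¬ (c x y ↔ c z y)) (k : ℕ) :
    {z | (c x z ↔ e) ∧ (differences c x z).ncard ≤ k}.Finite := by
  classical
  by_contra hinf
  obtain ⟨Y, hYT, hY⟩ := hT.exists_subset_card_eq (k + 1)
  have hF : (⋃ y ∈ Y, differences c x y).Finite := Y.finite_toSet.biUnion fun y _ => hfin x y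
  obtain ⟨z, ⟨hz, hzk⟩, hzF⟩ := Set.Infinite.exists_notMem_finset hinf (Y ∪ hF.toFinset)
  simp only [Finset.mem_union, Set.Finite.mem_toFinset, Set.mem_iUnion, not_or, not_exists] at hzF
  have hsub : (Y : Set X) ⊆ differences c x z := by
    intro y hy
    refine h y (hYT hy) z (fun e => hzF.1 (e ▸ hy)) ?_
    have := hzF.2 y hy
    simp only [differences, Set.mem_ofPred_eq, not_not] at this
    rw [← this, hz]
  have := Set.ncard_le_ncard hsub (hfin x z)
  rw [Set.ncard_coe_finset] at this
  omega

theorem locallyRigid_of_graph_of_finite {X : Type*} [Infinite X] {G : Subgroup (Equiv.Perm X)}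
    (hprim : PreservesOnlyTrivialSetoids G) {c : X → X → Prop}
    (hc : ∀ g ∈ G, ∀ x y, c x y → c (g x) (g y)) (hsymm : ∀ x y, c x y ↔ c y x)
    (hirr : ∀ x, ¬ c x x) {a b p q : X} (hab : c a b) (hpq : p ≠ q) (hnpq : ¬ c p q)
    (hfin : ∀ x y, (differences c x y).Finite) : LocallyRigid G := by
  have hne : ∀ {x y}, c x y → x ≠ y := fun h e => hirr _ (e ▸ h)
  by_cases h1 : {y | c a y}.Finite
  · let Γ : SimpleGraph X := ⟨c, ⟨fun x y => (hsymm x y).1⟩, ⟨hirr⟩⟩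
    refine locallyRigid_of_locallyFinite hprim (Γ := Γ) hc (fun x => ?_) hab
    refine (h1.union (hfin a x)).subset fun y hy => ?_
    have hy : c x y := hy
    simp only [differences, Set.mem_union, Set.mem_ofPred_eq]
    grind
  by_cases h2 : {y | ¬ c a y}.Finite
  · let Γ : SimpleGraph X := ⟨fun x y => x ≠ y ∧ ¬ c x y,
      ⟨fun x y h => ⟨h.1.symm, fun h' => h.2 ((hsymm x y).2 h')⟩⟩, ⟨fun x h => h.1 rfl⟩⟩
    refine locallyRigid_of_locallyFinite hprim (Γ := Γ) (fun g hg x y h => ?_) (fun x => ?_)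
      (show Γ.Adj p q from ⟨hpq, hnpq⟩)
    · exact ⟨g.injective.ne h.1, fun h' => h.2 (by simpa using hc g⁻¹ (G.inv_mem hg) _ _ h')⟩
    · refine (h2.union (hfin a x)).subset fun y hy => ?_
      have hy : ¬ c x y := hy.2
      simp only [differences, Set.mem_union, Set.mem_ofPred_eq]
      grind
  have h1' : ∀ x, {y | c x y}.Infinite := by
    refine fun x h => h1 ((h.union (hfin a x)).subset fun y hy => ?_)
    simp only [differences, Set.mem_union, Set.mem_ofPred_eq] at hy ⊢
    grind
  have h2' : ∀ x, {y | ¬ c x y}.Infinite := by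
    refine fun x h => h2 ((h.union (hfin a x)).subset fun y hy => ?_)
    simp only [differences, Set.mem_union, Set.mem_ofPred_eq] at hy ⊢
    grind
  let Γ : SimpleGraph X :=
    ⟨fun x y => x ≠ y ∧ (differences c x y).ncard = (differences c a b).ncard,
      ⟨fun x y h => ⟨h.1.symm, differences_comm c x y ▸ h.2⟩⟩, ⟨fun x h => h.1 rfl⟩⟩
  refine locallyRigid_of_locallyFinite hprim (Γ := Γ) (fun g hg x y h => ?_) (fun x => ?_)
    (show Γ.Adj a b from ⟨hne hab, rfl⟩)
  · refine ⟨g.injective.ne h.1, ?_⟩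
    rw [differences_map hc hg, Set.ncard_image_of_injective _ g.injective, h.2]
  · refine ((finite_of_differences_ncard_le hfin (x := x) (e := True) (h2' x) ?_
      (differences c a b).ncard).union (finite_of_differences_ncard_le hfin (x := x) (e := False)
      (h1' x) ?_ (differences c a b).ncard)).subset fun y hy => ?_
    · intro y hy z _ hyz
      simp only [Set.mem_ofPred_eq] at hy
      have := hsymm y z
      grind
    · intro y hy z _ hyz
      simp only [Set.mem_ofPred_eq] at hy
      have := hsymm y z
      grind
    · have hy := hy.2.le
      simp only [Set.mem_union, Set.mem_ofPred_eq]
      grind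

/-- `G` is transitive on unordered pairs of distinct points. -/
def TwoHomogeneous {X : Type*} (G : Subgroup (Equiv.Perm X)) : Prop :=
  ∀ a b c d : X, a ≠ b → c ≠ d → ∃ g ∈ G, (g a = c ∧ g b = d) ∨ (g a = d ∧ g b = c)

theorem locallyRigid_of_not_twoHomogeneous {X : Type*} [Infinite X] {G : Subgroup (Equiv.Perm X)}
    (htrans : ∀ x y : X, ∃ g ∈ G, g x = y) (hprim : PreservesOnlyTrivialSetoids G)
    (hG : ¬ TwoHomogeneous G) : LocallyRigid G := by
  unfold TwoHomogeneous at hG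
  push Not at hG
  obtain ⟨a, b, p, q, hab, hpq, hG⟩ := hG
  let c : X → X → Prop := fun x y => ∃ g ∈ G, (g a = x ∧ g b = y) ∨ (g a = y ∧ g b = x)
  have hc : ∀ g ∈ G, ∀ x y, c x y → c (g x) (g y) := by
    rintro g hg x y ⟨h, hh, hxy⟩
    refine ⟨g * h, G.mul_mem hg hh, ?_⟩
    rcases hxy with ⟨rfl, rfl⟩ | ⟨rfl, rfl⟩ <;> simp
  have hsymm : ∀ x y, c x y ↔ c y x := fun x y => by simp only [c, or_comm]
  have hirr : ∀ x, ¬ c x x := by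
    rintro x ⟨g, -, h | h⟩ <;> exact hab (g.injective (h.1.trans h.2.symm))
  have hnpq : ¬ c p q := by
    rintro ⟨g, hg, h⟩
    have := hG g hg
    grind
  rcases separators_infinite_or_differences_finite hprim hc with hinf | hfin
  · refine locallyRigid_of_autOn hc (exists_rigid_of_graph hsymm hinf fun x y => ?_)
    obtain ⟨g, hg, hgx⟩ := htrans x y
    exact ⟨g, fun u v => ⟨hc g hg u v, fun h => by simpa using hc g⁻¹ (G.inv_mem hg) _ _ h⟩, hgx⟩
  · exact locallyRigid_of_graph_of_finite hprim hc hsymm hirr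
      (show c a b from ⟨1, G.one_mem, by simp⟩) hpq hnpq hfin

theorem locallyRigid_of_twoHomogeneous {X : Type*} [Infinite X] {G : Subgroup (Equiv.Perm X)}
    (hprim : PreservesOnlyTrivialSetoids G) (hG : TwoHomogeneous G)
    (hnot2t : ¬ ∀ a b c d : X, a ≠ b → c ≠ d → ∃ g ∈ G, g a = c ∧ g b = d) :
    LocallyRigid G := by
  push Not at hnot2t
  obtain ⟨a, b, p, q, hab, hpq, hno⟩ := hnot2t
  let c : X → X → Prop := fun x y => ∃ g ∈ G, g a = x ∧ g b = y
  have hc : ∀ g ∈ G, ∀ x y, c x y → c (g x) (g y) := by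
    rintro g hg x y ⟨h, hh, rfl, rfl⟩
    exact ⟨g * h, G.mul_mem hg hh, by simp⟩
  have hirr : ∀ x, ¬ c x x := by
    rintro x ⟨g, -, h⟩
    exact hab (g.injective (h.1.trans h.2.symm))
  have hba : ¬ c b a := by
    rintro ⟨s, hs, hsa, hsb⟩
    obtain ⟨g, hg, h | h⟩ := hG a b p q hab hpq
    · exact hno g hg h.1 h.2
    · exact hno (g * s) (G.mul_mem hg hs) (by simp [hsa, h.2]) (by simp [hsb, h.1])
  have htour : ∀ x y, x ≠ y → (c x y ↔ ¬ c y x) := by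
    intro x y hxy
    constructor
    · rintro ⟨g, hg, rfl, rfl⟩ h
      exact hba (by simpa using hc g⁻¹ (G.inv_mem hg) _ _ h)
    · intro h
      obtain ⟨g, hg, h' | h'⟩ := hG a b x y hab hxy
      · exact ⟨g, hg, h'⟩
      · exact absurd ⟨g, hg, h'⟩ h
  rcases separators_infinite_or_differences_finite hprim hc with hinf | hfin
  · exact locallyRigid_of_autOn hc (exists_rigid_of_tournament hirr htour hinf)
  · exfalso
    have hk : ∀ y, (differences c a y).ncard ≤ (differences c a b).ncard := by
      intro y
      by_cases hay : a = y
      · subst hay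
        simp [differences]
      obtain ⟨g, hg, ⟨h1, h2⟩ | ⟨h1, h2⟩⟩ := hG a b a y hab hay
      · have := differences_map hc hg a b
        rw [h1, h2] at this
        rw [this, Set.ncard_image_of_injective _ g.injective]
      · have := differences_map hc hg a b
        rw [h1, h2, differences_comm] at this
        rw [this, Set.ncard_image_of_injective _ g.injective]
    have key : ∀ e, {y | c a y ↔ e}.Finite := by
      intro e
      by_contra hT
      refine hT ((finite_of_differences_ncard_le hfin (x := a) (e := e) hT ?_
        (differences c a b).ncard).subset fun y hy => ⟨hy, hk y⟩)
      intro y hy z hzy hyz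
      have := htour z y hzy
      simp only [Set.mem_ofPred_eq] at hy
      grind
    refine Set.infinite_univ (((key True).union (key False)).subset fun y _ => ?_)
    simp only [Set.mem_union, Set.mem_ofPred_eq]
    grind

/-- main theorem: closed orbit-equivalent H ≤ G on infinite X, with G primitive
    but not 2-transitive, implies H = G. -/
theorem stmt19 {X : Type*} [Infinite X] [DecidableEq X] (G H : Subgroup (Equiv.Perm X))
    (hle : H ≤ G) (hGc : IsClosedGroup G) (hHc : IsClosedGroup H)
    (horb : ∀ s t : Finset X, (∃ g ∈ G, s.image g = t) ↔ ∃ h ∈ H, s.image h = t)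
    (htrans : ∀ x y : X, ∃ g ∈ G, g x = y)
    (hprim : ∀ r : Setoid X, (∀ g ∈ G, ∀ x y : X, r.r x y → r.r (g x) (g y)) →
      (∀ x y : X, r.r x y → x = y) ∨ (∀ x y : X, r.r x y))
    (hnot2t : ¬ ∀ a b c d : X, a ≠ b → c ≠ d → ∃ g ∈ G, g a = c ∧ g b = d) :
    H = G := by
  have hrigid : LocallyRigid G := by
    by_cases hG : TwoHomogeneous G
    · exact locallyRigid_of_twoHomogeneous hprim hG hnot2t
    · exact locallyRigid_of_not_twoHomogeneous htrans hprim hG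
  refine le_antisymm hle fun g hg => hHc g fun s => ?_
  obtain ⟨B, hsB, hB⟩ := hrigid s
  obtain ⟨h, hh, himg⟩ := (horb B (B.image g)).1 ⟨g, hg, rfl⟩
  refine ⟨h, hh, fun x hx => ?_⟩
  have hfix := hB (h⁻¹ * g) (G.mul_mem (G.inv_mem (hle hh)) hg) (fun y hy => ?_) x hx
  · rw [Equiv.Perm.mul_apply, Equiv.Perm.inv_eq_iff_eq] at hfix
    exact hfix.symm
  · obtain ⟨z, hz, hzy⟩ := Finset.mem_image.1 (himg ▸ Finset.mem_image_of_mem g hy)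
    simpa [← hzy] using hz
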